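/- arXiv:2106.07494 — 4 statements merged into one kernel-verified Lean document; each statement's English description precedes it below -/
import Mathlib

section
/- For integers n ≥ 1 and 1 ≤ i ≤ n−1, the number of permutations σ of {1,…,n} such that σ fixes a prefix of size i and σ does not fix a prefix of size m for any m with i < m ≤ n−1 equals i!·c_{n−i}. -/
open Nat Finset

/-- The prefix `{1, …, j}` of `{1, …, n}`. We represent `{1, …, n}` by `Fin n`,
an element `x : Fin n` having label `x.val + 1`; so the prefix of size `j` is the
set of elements with label at most `j`. -/
def pref (n j : ℕ) : Finset (Fin n) :=
  Finset.univ.filter (fun x => x.val + 1 ≤ j)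

/-- The segment `{u, …, v}` inside `{1, …, n}` (labels as above). -/
def seg (n u v : ℕ) : Finset (Fin n) :=
  Finset.univ.filter (fun x => u ≤ x.val + 1 ∧ x.val + 1 ≤ v)

/-- A permutation `σ` of `{1, …, n}` fixes a prefix of size `j` if
`σ({1, …, j}) = {1, …, j}`. -/
def FixesPrefix {n : ℕ} (σ : Equiv.Perm (Fin n)) (j : ℕ) : Prop :=
  (pref n j).image σ = pref n j

/-- `c n`: the number of connected permutations of size `n`, i.e. permutations of
`{1, …, n}` fixing no prefix of size `j` for any `1 ≤ j ≤ n - 1`. -/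
noncomputable def c (n : ℕ) : ℕ :=
  Nat.card {σ : Equiv.Perm (Fin n) // ∀ j, 1 ≤ j → j ≤ n - 1 → ¬ FixesPrefix σ j}

/-- `cS n S`: the number of `S`-connected permutations of size `n`, i.e. permutations of
`{1, …, n}` fixing no prefix of size `j` for any `j ∈ S`. -/
noncomputable def cS (n : ℕ) (S : Finset ℕ) : ℕ :=
  Nat.card {σ : Equiv.Perm (Fin n) // ∀ j ∈ S, ¬ FixesPrefix σ j}

theorem fixesPrefix_iff {n : ℕ} (σ : Equiv.Perm (Fin n)) (j : ℕ) :
    FixesPrefix σ j ↔ ∀ x : Fin n, x.val < j → (σ x).val < j := by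
  unfold FixesPrefix
  constructor
  · intro h x hx
    have h1 : σ x ∈ (pref n j).image σ :=
      Finset.mem_image_of_mem _ (by simp [pref]; omega)
    rw [h] at h1
    simp [pref] at h1
    omega
  · intro h
    apply Finset.eq_of_subset_of_card_le
    · intro y hy
      obtain ⟨x, hx, rfl⟩ := Finset.mem_image.1 hy
      simp only [pref, Finset.mem_filter, Finset.mem_univ, true_and] at hx ⊢
      have := h x (by omega)
      omega
    · rw [Finset.card_image_of_injective _ σ.injective]

/-- Direct sum of two permutations. -/
def glue {i k : ℕ} (a : Equiv.Perm (Fin i)) (b : Equiv.Perm (Fin k)) :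
    Equiv.Perm (Fin (i + k)) :=
  finSumFinEquiv.permCongr (Equiv.Perm.sumCongr a b)

theorem glue_castAdd {i k : ℕ} (a : Equiv.Perm (Fin i)) (b : Equiv.Perm (Fin k)) (x : Fin i) :
    glue a b (Fin.castAdd k x) = Fin.castAdd k (a x) := by
  simp [glue, Equiv.permCongr_apply]

theorem glue_natAdd {i k : ℕ} (a : Equiv.Perm (Fin i)) (b : Equiv.Perm (Fin k)) (x : Fin k) :
    glue a b (Fin.natAdd i x) = Fin.natAdd i (b x) := by
  simp [glue, Equiv.permCongr_apply]

theorem glue_fixes {i k : ℕ} (a : Equiv.Perm (Fin i)) (b : Equiv.Perm (Fin k)) (j : ℕ) :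
    FixesPrefix (glue a b) (i + j) ↔ FixesPrefix b j := by
  rw [fixesPrefix_iff, fixesPrefix_iff]
  constructor
  · intro h x hx
    have := h (Fin.natAdd i x) (by simp; omega)
    rw [glue_natAdd] at this
    simpa using this
  · intro h x
    refine Fin.addCases (fun y _ => ?_) (fun y hy => ?_) x
    · rw [glue_castAdd]
      have := (a y).isLt
      simp only [Fin.val_castAdd]
      omega
    · rw [glue_natAdd]
      have := h y (by simpa using hy)
      simpa using this

theorem glue_surj {i k : ℕ} (σ : Equiv.Perm (Fin (i + k))) (h : FixesPrefix σ i) :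
    ∃ a b, glue a b = σ := by
  rw [fixesPrefix_iff] at h
  have hm : Set.MapsTo (finSumFinEquiv.symm.permCongr σ)
      (Set.range (Sum.inl : Fin i → Fin i ⊕ Fin k)) (Set.range Sum.inl) := by
    rintro _ ⟨x, rfl⟩
    have hx := h (Fin.castAdd k x) (by simp)
    refine ⟨⟨_, hx⟩, ?_⟩
    apply finSumFinEquiv.injective
    ext
    simp [Equiv.permCongr_apply]
  obtain ⟨⟨a, b⟩, hab⟩ := Equiv.Perm.mem_sumCongrHom_range_of_perm_mapsTo_inl hm
  refine ⟨a, b, ?_⟩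
  have hab' : Equiv.Perm.sumCongr a b = finSumFinEquiv.symm.permCongr σ := hab
  unfold glue
  rw [hab']
  ext x
  simp [Equiv.permCongr_apply]

theorem glue_inj {i k : ℕ} {a a' : Equiv.Perm (Fin i)} {b b' : Equiv.Perm (Fin k)}
    (h : glue a b = glue a' b') : a = a' ∧ b = b' := by
  constructor
  · ext x
    have := congrArg (fun τ => (τ (Fin.castAdd k x)).val) h
    simpa [glue_castAdd] using this
  · ext x
    have := congrArg (fun τ => (τ (Fin.natAdd i x)).val) h
    simpa [glue_natAdd] using this

/-- For integers `n ≥ 1` and `1 ≤ i ≤ n−1`, the number of permutations `σ` of `{1,…,n}`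
such that `σ` fixes a prefix of size `i` and `σ` does not fix a prefix of size `m` for any
`m` with `i < m ≤ n−1` equals `i!·c_{n−i}`. -/
theorem count_fix_prefix_exactly (n i : ℕ) (hn : 1 ≤ n) (hi : 1 ≤ i) (hin : i ≤ n - 1) :
    Nat.card {σ : Equiv.Perm (Fin n) //
      FixesPrefix σ i ∧ ∀ m, i < m → m ≤ n - 1 → ¬ FixesPrefix σ m}
    = i ! * c (n - i) := by
  obtain ⟨k, rfl⟩ : ∃ k, n = i + k := ⟨n - i, by omega⟩
  rw [Nat.add_sub_cancel_left]
  have hc : i ! = Nat.card (Equiv.Perm (Fin i)) := by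
    rw [Nat.card_eq_fintype_card, Fintype.card_perm, Fintype.card_fin]
  rw [hc, c, ← Nat.card_prod]
  symm
  refine Nat.card_congr (Equiv.ofBijective
    (fun p => ⟨glue p.1 p.2.1, ?_, ?_⟩) ⟨?_, ?_⟩)
  · have := (glue_fixes p.1 p.2.1 0).2 (by rw [fixesPrefix_iff]; intro x hx; omega)
    simpa using this
  · intro m hm hmn hf
    obtain ⟨j, rfl⟩ : ∃ j, m = i + j := ⟨m - i, by omega⟩
    exact p.2.2 j (by omega) (by omega) ((glue_fixes _ _ _).1 hf)
  · rintro ⟨a, b, hb⟩ ⟨a', b', hb'⟩ h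
    obtain ⟨rfl, rfl⟩ := glue_inj (congrArg Subtype.val h)
    rfl
  · rintro ⟨σ, h1, h2⟩
    obtain ⟨a, b, rfl⟩ := glue_surj σ h1
    exact ⟨⟨a, b, fun j hj hjk hf => h2 (i + j) (by omega) (by omega)
      ((glue_fixes _ _ _).2 hf)⟩, rfl⟩
end

section
/- For every integer n ≥ 1, every subset S ⊆ {1,…,n−1}, and every i ∈ S, the number of permutations σ of {1,…,n} such that σ fixes a prefix of size i and σ does not fix a prefix of size s for any s ∈ S with s > i equals i!·c_{n−i}^{S_i}, where S_i = {1,…,n−i−1} ∩ {s−i : s ∈ S}. -/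
open Nat Finset

/-- The direct sum of two permutations. -/
def dsum {i m : ℕ} (a : Equiv.Perm (Fin i)) (b : Equiv.Perm (Fin m)) :
    Equiv.Perm (Fin (i + m)) :=
  finSumFinEquiv.permCongr (Equiv.sumCongr a b)

theorem dsum_left {i m : ℕ} (a : Equiv.Perm (Fin i)) (b : Equiv.Perm (Fin m)) (x : Fin i) :
    dsum a b (Fin.castAdd m x) = Fin.castAdd m (a x) := by
  simp [dsum, Equiv.permCongr_apply]

theorem dsum_right {i m : ℕ} (a : Equiv.Perm (Fin i)) (b : Equiv.Perm (Fin m)) (x : Fin m) :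
    dsum a b (Fin.natAdd i x) = Fin.natAdd i (b x) := by
  simp [dsum, Equiv.permCongr_apply]

theorem dsum_fixes {i m : ℕ} (a : Equiv.Perm (Fin i)) (b : Equiv.Perm (Fin m)) (t : ℕ) :
    FixesPrefix (dsum a b) (i + t) ↔ FixesPrefix b t := by
  rw [fixesPrefix_iff, fixesPrefix_iff]
  constructor
  · intro h x hx
    have := h (Fin.natAdd i x) (by simpa using hx)
    rw [dsum_right] at this
    simpa using this
  · intro h x
    refine Fin.addCases (fun y _ => ?_) (fun y hy => ?_) x
    · rw [dsum_left]
      have := (a y).2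
      simp only [Fin.val_castAdd]
      omega
    · rw [dsum_right]
      have := h y (by simpa using hy)
      simpa using this

theorem dsum_inj {i m : ℕ} {a a' : Equiv.Perm (Fin i)} {b b' : Equiv.Perm (Fin m)}
    (h : dsum a b = dsum a' b') : a = a' ∧ b = b' := by
  constructor
  · ext x
    have := congrArg (fun σ => (σ (Fin.castAdd m x)).val) h
    simpa [dsum_left] using this
  · ext x
    have := congrArg (fun σ => (σ (Fin.natAdd i x)).val) h
    simpa [dsum_right] using this

theorem dsum_surj {i m : ℕ} (σ : Equiv.Perm (Fin (i + m))) (h : FixesPrefix σ i) :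
    ∃ a b, σ = dsum a b := by
  rw [fixesPrefix_iff] at h
  have hm : Set.MapsTo (finSumFinEquiv.symm.permCongr σ)
      (Set.range (Sum.inl : Fin i → Fin i ⊕ Fin m)) (Set.range Sum.inl) := by
    rintro _ ⟨x, rfl⟩
    have hx := h (Fin.castAdd m x) (by simp)
    refine ⟨⟨_, hx⟩, ?_⟩
    apply finSumFinEquiv.injective
    simp [Equiv.permCongr_apply]
  obtain ⟨⟨a, b⟩, hab⟩ := Equiv.Perm.mem_sumCongrHom_range_of_perm_mapsTo_inl hm
  refine ⟨a, b, ?_⟩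
  have h2 : Equiv.sumCongr a b = finSumFinEquiv.symm.permCongr σ := hab
  unfold dsum
  rw [h2]
  ext x
  simp [Equiv.permCongr_apply]

theorem count_aux (i m : ℕ) (S T : Finset ℕ)
    (hT : ∀ t, t ∈ T ↔ 0 < t ∧ i + t ∈ S) :
    Nat.card {σ : Equiv.Perm (Fin (i + m)) //
      FixesPrefix σ i ∧ ∀ s ∈ S, i < s → ¬ FixesPrefix σ s} = i ! * cS m T := by
  let f : Equiv.Perm (Fin i) × {b : Equiv.Perm (Fin m) // ∀ j ∈ T, ¬ FixesPrefix b j} →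
      {σ : Equiv.Perm (Fin (i + m)) //
        FixesPrefix σ i ∧ ∀ s ∈ S, i < s → ¬ FixesPrefix σ s} := fun p =>
    ⟨dsum p.1 p.2.1, by
      refine ⟨(dsum_fixes p.1 p.2.1 0).2 ((fixesPrefix_iff _ _).2 (by simp)), ?_⟩
      intro s hs his
      obtain ⟨t, rfl⟩ := Nat.exists_eq_add_of_lt his
      rw [add_assoc] at hs ⊢
      rw [dsum_fixes]
      exact p.2.2 _ ((hT _).2 ⟨by omega, hs⟩)⟩
  have hf : Function.Bijective f := by
    constructor
    · rintro ⟨a, b, hb⟩ ⟨a', b', hb'⟩ h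
      obtain ⟨rfl, rfl⟩ := dsum_inj (congrArg Subtype.val h)
      rfl
    · rintro ⟨σ, h1, h2⟩
      obtain ⟨a, b, rfl⟩ := dsum_surj σ h1
      refine ⟨⟨a, b, ?_⟩, rfl⟩
      intro j hj hb
      obtain ⟨hj0, hjS⟩ := (hT j).1 hj
      exact h2 _ hjS (by omega) ((dsum_fixes a b j).2 hb)
  rw [← Nat.card_congr (Equiv.ofBijective f hf), Nat.card_prod, cS, Nat.card_perm, Nat.card_fin]

/-- For every integer `n ≥ 1`, every subset `S ⊆ {1,…,n−1}`, and every `i ∈ S`, the number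
of permutations `σ` of `{1,…,n}` such that `σ` fixes a prefix of size `i` and `σ` does not
fix a prefix of size `s` for any `s ∈ S` with `s > i` equals `i!·c_{n−i}^{S_i}`, where
`S_i = {1,…,n−i−1} ∩ {s−i : s ∈ S}`. -/
theorem count_fix_prefix_exactly_S (n : ℕ) (hn : 1 ≤ n)
    (S : Finset ℕ) (hS : S ⊆ Finset.Icc 1 (n - 1)) (i : ℕ) (hi : i ∈ S) :
    Nat.card {σ : Equiv.Perm (Fin n) //
      FixesPrefix σ i ∧ ∀ s ∈ S, i < s → ¬ FixesPrefix σ s}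
    = i ! * cS (n - i) (Finset.Icc 1 (n - i - 1) ∩ S.image (fun s => s - i)) := by
  have hin := Finset.mem_Icc.1 (hS hi)
  obtain ⟨m, rfl⟩ := Nat.exists_eq_add_of_le (show i ≤ n by omega)
  have e : i + m - i = m := by omega
  rw [e]
  apply count_aux
  intro t
  simp only [Finset.mem_inter, Finset.mem_Icc, Finset.mem_image]
  constructor
  · rintro ⟨⟨h1, h2⟩, s, hs, h3⟩
    refine ⟨h1, ?_⟩
    have : i + t = s := by omega
    rwa [this]
  · rintro ⟨h1, h2⟩
    have := Finset.mem_Icc.1 (hS h2)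
    exact ⟨⟨h1, by omega⟩, i + t, h2, by omega⟩
end

section
/- Let k and i be integers with 1 < i < k. The number of permutations σ of {1,…,k} such that σ fixes no prefix of size j for any 1 ≤ j ≤ k−1, and moreover σ(1) ≠ i, σ(i) ≠ 1 and σ(i) ≠ i, equals c_k − 2·c_{k−1}^{{i−1,…,k−2}} + c_{k−2}^{{i−2,…,k−3}} − c_{k−1}. (Here, when i = 2 the set {i−2,…,k−3} contains 0, and c_{k−2}^{{0,…,k−3}} = 0. These permutations are exactly the subdivergence-free gluings of the tree f_{k,i} with itself, where the leaves are labelled 1 through k from the deepest leaf upward and the leaf below the extra edge receives label i.) -/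
open Nat Finset

theorem fixesPrefix_symm {n : ℕ} (σ : Equiv.Perm (Fin n)) (j : ℕ) :
    FixesPrefix σ⁻¹ j ↔ FixesPrefix σ j := by
  unfold FixesPrefix
  constructor
  · intro h
    conv_lhs => rw [← h]
    rw [Finset.image_image]
    ext; simp
  · intro h
    conv_lhs => rw [← h]
    rw [Finset.image_image]
    ext; simp

/-- insert the point `p ↦ q` in a permutation -/
def insPt {n : ℕ} (p q : Fin (n + 1)) (τ : Equiv.Perm (Fin n)) : Equiv.Perm (Fin (n + 1)) :=
  (finSuccEquiv' p).trans ((Equiv.optionCongr τ).trans (finSuccEquiv' q).symm)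

theorem insPt_self {n : ℕ} (p q : Fin (n + 1)) (τ : Equiv.Perm (Fin n)) :
    insPt p q τ p = q := by simp [insPt]

theorem insPt_succAbove {n : ℕ} (p q : Fin (n + 1)) (τ : Equiv.Perm (Fin n)) (x : Fin n) :
    insPt p q τ (p.succAbove x) = q.succAbove (τ x) := by simp [insPt]

theorem insPt_inj {n : ℕ} (p q : Fin (n + 1)) : Function.Injective (insPt p q) := by
  intro a b h
  ext1 x
  have := congrArg (fun e : Equiv.Perm (Fin (n+1)) => e (p.succAbove x)) h
  simp only [insPt_succAbove] at this
  exact Fin.succAbove_right_injective this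

theorem insPt_surj {n : ℕ} (p q : Fin (n + 1)) (σ : Equiv.Perm (Fin (n + 1))) (h : σ p = q) :
    ∃ τ, insPt p q τ = σ := by
  refine ⟨Equiv.removeNone ((finSuccEquiv' p).symm.trans (σ.trans (finSuccEquiv' q))), ?_⟩
  have : Equiv.optionCongr (Equiv.removeNone
      ((finSuccEquiv' p).symm.trans (σ.trans (finSuccEquiv' q))))
      = ((finSuccEquiv' p).symm.trans (σ.trans (finSuccEquiv' q))) := by
    ext1 x
    rcases x with _ | x
    · simp [h]
    · rw [Equiv.optionCongr_apply, Option.map_some]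
      apply Equiv.removeNone_some
      apply Option.ne_none_iff_exists'.1
      intro h0
      have h3 : ((finSuccEquiv' p).symm.trans (σ.trans (finSuccEquiv' q))) none = none := by
        simp [h]
      have := Equiv.injective _ (h0.trans h3.symm)
      simp at this
  unfold insPt
  rw [this]
  ext x; simp

theorem card_insPt {n : ℕ} (p q : Fin (n + 1)) (P : Equiv.Perm (Fin (n + 1)) → Prop)
    (Q : Equiv.Perm (Fin n) → Prop) (h : ∀ τ, P (insPt p q τ) ↔ Q τ) :
    Nat.card {σ // P σ ∧ σ p = q} = Nat.card {τ // Q τ} := by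
  symm
  refine Nat.card_congr (Equiv.ofBijective
    (fun τ => ⟨insPt p q τ.1, (h _).2 τ.2, insPt_self _ _ _⟩) ⟨?_, ?_⟩)
  · intro a b hab
    exact Subtype.ext (insPt_inj p q (congrArg Subtype.val hab))
  · rintro ⟨σ, hP, hs⟩
    obtain ⟨τ, rfl⟩ := insPt_surj p q σ hs
    exact ⟨⟨τ, (h _).1 hP⟩, rfl⟩

theorem succAbove_val {n : ℕ} (p : Fin (n + 1)) (x : Fin n) :
    (p.succAbove x).val = if x.val < p.val then x.val else x.val + 1 := by
  simp only [Fin.succAbove, Fin.lt_def, Fin.val_castSucc]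
  split_ifs <;> simp

theorem fp_insPt_iff {n : ℕ} (p q : Fin (n + 1)) (τ : Equiv.Perm (Fin n)) (j : ℕ) :
    FixesPrefix (insPt p q τ) j ↔ (p.val < j → q.val < j) ∧
      ∀ x : Fin n, (p.succAbove x).val < j → (q.succAbove (τ x)).val < j := by
  rw [fixesPrefix_iff, Fin.forall_iff_succAbove p]
  simp only [insPt_self, insPt_succAbove]

theorem fp_insPt_lt {n : ℕ} (p q : Fin (n + 1)) (τ : Equiv.Perm (Fin n)) (j : ℕ)
    (hp : p.val < j) (hq : q.val < j) :
    FixesPrefix (insPt p q τ) j ↔ FixesPrefix τ (j - 1) := by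
  rw [fp_insPt_iff, fixesPrefix_iff]
  simp only [hp, hq, forall_true_left, true_and]
  refine forall_congr' fun x => ?_
  rw [succAbove_val, succAbove_val]
  split_ifs <;> omega

theorem fp_insPt_ge {n : ℕ} (p q : Fin (n + 1)) (τ : Equiv.Perm (Fin n)) (j : ℕ)
    (hp : j ≤ p.val) (hq : j ≤ q.val) :
    FixesPrefix (insPt p q τ) j ↔ FixesPrefix τ j := by
  rw [fp_insPt_iff, fixesPrefix_iff]
  simp only [hp.not_gt, hq.not_gt, IsEmpty.forall_iff, true_and]
  refine forall_congr' fun x => ?_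
  rw [succAbove_val, succAbove_val]
  split_ifs <;> omega

theorem fp_insPt_no {n : ℕ} (p q : Fin (n + 1)) (τ : Equiv.Perm (Fin n)) (j : ℕ)
    (hp : p.val < j) (hq : j ≤ q.val) :
    ¬ FixesPrefix (insPt p q τ) j := by
  rw [fp_insPt_iff]
  intro h
  have := h.1 hp
  omega

/-- connectedness -/
def Conn {n : ℕ} (σ : Equiv.Perm (Fin n)) : Prop :=
  ∀ j, 1 ≤ j → j ≤ n - 1 → ¬ FixesPrefix σ j

theorem conn_insA {n : ℕ} (p q : Fin (n + 1)) (hp : p.val = 0) (hq : 1 ≤ q.val)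
    (τ : Equiv.Perm (Fin n)) :
    Conn (insPt p q τ) ↔ ∀ j ∈ Finset.Icc q.val (n - 1), ¬ FixesPrefix τ j := by
  simp only [Conn, Finset.mem_Icc]
  have := q.isLt
  constructor
  · intro h j hj
    have h' := h (j + 1) (by omega) (by omega)
    rwa [fp_insPt_lt _ _ _ _ (by omega) (by omega)] at h'
  · intro h j h1 h2
    by_cases hj : j ≤ q.val
    · exact fp_insPt_no _ _ _ _ (by omega) hj
    · rw [fp_insPt_lt _ _ _ _ (by omega) (by omega)]
      exact h _ (by omega)

theorem conn_insC {n : ℕ} (q : Fin (n + 1)) (h1 : 1 ≤ q.val) (h2 : q.val < n)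
    (τ : Equiv.Perm (Fin n)) :
    Conn (insPt q q τ) ↔ Conn τ := by
  simp only [Conn]
  constructor
  · intro h j hj hj'
    by_cases hjq : j ≤ q.val
    · have h' := h j (by omega) (by omega)
      rwa [fp_insPt_ge _ _ _ _ hjq hjq] at h'
    · have h' := h (j + 1) (by omega) (by omega)
      rwa [fp_insPt_lt _ _ _ _ (by omega) (by omega)] at h'
  · intro h j hj hj'
    by_cases hjq : j ≤ q.val
    · rw [fp_insPt_ge _ _ _ _ hjq hjq]
      exact h _ (by omega) (by omega)
    · rw [fp_insPt_lt _ _ _ _ (by omega) (by omega)]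
      exact h _ (by omega) (by omega)

theorem conn_inv {n : ℕ} (σ : Equiv.Perm (Fin n)) : Conn σ⁻¹ ↔ Conn σ := by
  simp only [Conn, fixesPrefix_symm]

theorem cardA {n : ℕ} (p q : Fin (n + 1)) (hp : p.val = 0) (hq : 1 ≤ q.val) :
    Nat.card {σ : Equiv.Perm (Fin (n + 1)) // Conn σ ∧ σ p = q}
      = cS n (Finset.Icc q.val (n - 1)) :=
  card_insPt p q _ _ (conn_insA p q hp hq)

theorem cardB {n : ℕ} (p q : Fin (n + 1)) (hp : p.val = 0) (hq : 1 ≤ q.val) :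
    Nat.card {σ : Equiv.Perm (Fin (n + 1)) // Conn σ ∧ σ q = p}
      = cS n (Finset.Icc q.val (n - 1)) := by
  rw [← cardA p q hp hq]
  refine Nat.card_congr ((Equiv.inv (Equiv.Perm (Fin (n + 1)))).subtypeEquiv fun σ => ?_)
  simp only [Equiv.inv_apply, conn_inv, Equiv.Perm.inv_eq_iff_eq]
  exact and_congr_right fun _ => eq_comm

theorem cardC {n : ℕ} (q : Fin (n + 1)) (h1 : 1 ≤ q.val) (h2 : q.val < n) :
    Nat.card {σ : Equiv.Perm (Fin (n + 1)) // Conn σ ∧ σ q = q} = c n :=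
  card_insPt q q _ _ (conn_insC q h1 h2)

theorem cardAB {n : ℕ} (p q : Fin (n + 2)) (hp : p.val = 0) (hq : 1 ≤ q.val)
    (hqn : q.val < n + 1) :
    Nat.card {σ : Equiv.Perm (Fin (n + 2)) // (Conn σ ∧ σ q = p) ∧ σ p = q}
      = cS n (Finset.Icc (q.val - 1) (n - 1)) := by
  have hqp : q = p.succAbove ⟨q.val - 1, by omega⟩ := by
    apply Fin.ext
    rw [succAbove_val]
    split_ifs <;> simp <;> omega
  have hpq : p = q.succAbove ⟨0, by omega⟩ := by
    apply Fin.ext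
    rw [succAbove_val]
    rw [if_pos (by simp only []; omega)]
    exact hp
  rw [card_insPt p q _ (fun τ : Equiv.Perm (Fin (n + 1)) =>
    (∀ j ∈ Finset.Icc q.val n, ¬ FixesPrefix τ j) ∧ τ ⟨q.val - 1, by omega⟩ = ⟨0, by omega⟩)]
  · refine card_insPt _ _ _ _ fun τ => ?_
    simp only [Finset.mem_Icc]
    constructor
    · intro h j hj
      have h' := h (j + 1) (by omega)
      rwa [fp_insPt_lt _ _ _ _ (by simp; omega) (by simp)] at h'
    · intro h j hj
      rw [fp_insPt_lt _ _ _ _ (by simp; omega) (by simp; omega)]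
      exact h _ (by omega)
  · intro τ
    rw [conn_insA p q hp hq]
    refine and_congr (by simp) ?_
    have : insPt p q τ q = q.succAbove (τ ⟨q.val - 1, by omega⟩) := by
      conv_lhs => rw [hqp]
      rw [← insPt_succAbove p q, ← hqp]
    rw [this]
    conv_lhs => rhs; rw [hpq]
    exact Fin.succAbove_right_injective.eq_iff

theorem incl_excl {α : Type*} [Fintype α] (P A B C : α → Prop)
    (hAC : ∀ x, A x → ¬ C x) (hBC : ∀ x, B x → ¬ C x) :
    (Nat.card {x // P x ∧ ¬ A x ∧ ¬ B x ∧ ¬ C x} : ℤ) =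
      Nat.card {x // P x} - Nat.card {x // P x ∧ A x} - Nat.card {x // P x ∧ B x}
        + Nat.card {x // (P x ∧ B x) ∧ A x} - Nat.card {x // P x ∧ C x} := by
  classical
  simp only [Nat.card_eq_fintype_card, Fintype.card_subtype, Finset.card_filter]
  push_cast
  simp only [← Finset.sum_sub_distrib, ← Finset.sum_add_distrib]
  refine Finset.sum_congr rfl fun x _ => ?_
  have := hAC x
  have := hBC x
  by_cases P x <;> by_cases A x <;> by_cases B x <;> by_cases C x <;> simp_all

/-- Subdivergence-free gluings of `f_{k,i}` with itself, `1 < i < k`: the number of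
permutations `σ` of `{1,…,k}` fixing no prefix of size `1,…,k−1` with `σ(1) ≠ i`,
`σ(i) ≠ 1` and `σ(i) ≠ i` equals
`c_k − 2·c_{k−1}^{{i−1,…,k−2}} + c_{k−2}^{{i−2,…,k−3}} − c_{k−1}`.
(Labels: the element of `Fin k` with value `v` has label `v + 1`.) -/
theorem line_with_extra_fan (k i : ℕ) (h1 : 1 < i) (h2 : i < k) :
    (Nat.card {σ : Equiv.Perm (Fin k) //
      (∀ j, 1 ≤ j → j ≤ k - 1 → ¬ FixesPrefix σ j) ∧
      σ ⟨0, by omega⟩ ≠ ⟨i - 1, by omega⟩ ∧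
      σ ⟨i - 1, by omega⟩ ≠ ⟨0, by omega⟩ ∧
      σ ⟨i - 1, by omega⟩ ≠ ⟨i - 1, by omega⟩} : ℤ)
    = (c k : ℤ) - 2 * (cS (k - 1) (Finset.Icc (i - 1) (k - 2)) : ℤ)
      + (cS (k - 2) (Finset.Icc (i - 2) (k - 3)) : ℤ) - (c (k - 1) : ℤ) := by
  obtain ⟨n, rfl⟩ : ∃ n, k = n + 2 := ⟨k - 2, by omega⟩
  have hp : (⟨0, by omega⟩ : Fin (n + 2)) ≠ ⟨i - 1, by omega⟩ := by
    simp [Fin.ext_iff]; omega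
  have key := incl_excl (α := Equiv.Perm (Fin (n + 2))) Conn
    (fun σ => σ ⟨0, by omega⟩ = ⟨i - 1, by omega⟩)
    (fun σ => σ ⟨i - 1, by omega⟩ = ⟨0, by omega⟩)
    (fun σ => σ ⟨i - 1, by omega⟩ = ⟨i - 1, by omega⟩)
    (fun σ ha hc => hp (σ.injective (ha.trans hc.symm)))
    (fun σ hb hc => hp (hb.symm.trans hc))
  rw [cardA _ _ rfl (by simp; omega), cardB _ _ rfl (by simp; omega),
    cardAB _ _ rfl (by simp; omega) (by simp; omega),
    cardC _ (by simp; omega) (by simp; omega)] at key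
  refine key.trans ?_
  have e1 : n + 2 - 1 = n + 1 := by omega
  have e2 : n + 2 - 2 = n := by omega
  have e3 : n + 2 - 3 = n - 1 := by omega
  have e4 : n + 1 - 1 = n := by omega
  have e5 : i - 1 - 1 = i - 2 := by omega
  have e6 : Nat.card {σ : Equiv.Perm (Fin (n + 2)) // Conn σ} = c (n + 2) := rfl
  simp only [e1, e2, e3, e4, e5, e6]
  ring
end

section
/- Let k, i, j be integers with 1 < i < k and j ≥ 1. Set K = k + 2(j−1), S = {j,…,i+j−2} ∪ {i+2(j−1),…,K−1}, and F = {i+j−1,…,i+2(j−1)} (a block of j consecutive elements). The number of permutations σ of {1,…,K} such that σ fixes no prefix of size s for any s ∈ S, and moreover σ({1,…,j}) ≠ F, σ(F) ≠ {1,…,j}, and σ(F) ≠ F, equals c_K^S − 2·j!·c_{k+j−2}^{{i+j−2,…,k+j−3}} + j!·j!·c_{k−2}^{{i−2,…,k−3}} − j!·c_{k+j−2}^{{j,…,k+j−3}}. (Here, when i = 2 the set {i−2,…,k−3} contains 0, and c_{k−2}^{{0,…,k−3}} = 0. These permutations are exactly the subdivergence-free gluings of the tree f_{k,i,j} with itself,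 with its K leaves labelled from the deepest fan upward so that F is the set of labels of the fan below the extra edge.) -/
open Nat Finset

/-- `y` shifted past the block `[a, a+j)`. -/
def upShift (a j y : ℕ) : ℕ := if y < a then y else y + j

/-- `σ` sends the block `[a,a+j)` onto the block `[b,b+j)` (values of `Fin n`, zero-based). -/
def BlockMap (n a b j : ℕ) (σ : Equiv.Perm (Fin n)) : Prop :=
  ∀ x : Fin n, (a ≤ x.val ∧ x.val < a + j) ↔ (b ≤ (σ x).val ∧ (σ x).val < b + j)

def blockFun (n m a j : ℕ) (hn : n = m + j) (ha : a ≤ m) : Fin j ⊕ Fin m → Fin n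
  | Sum.inl x => ⟨a + x.val, by omega⟩
  | Sum.inr y => ⟨upShift a j y.val, by unfold upShift; split_ifs <;> omega⟩

lemma blockFun_bij (n m a j : ℕ) (hn : n = m + j) (ha : a ≤ m) :
    Function.Bijective (blockFun n m a j hn ha) := by
  rw [Fintype.bijective_iff_injective_and_card]
  refine ⟨?_, by simp; omega⟩
  rintro (x | x) (y | y) h <;> simp only [blockFun, Fin.mk.injEq, upShift] at h
  · congr 1; ext; omega
  · split_ifs at h <;> omega
  · split_ifs at h <;> omega
  · congr 1; ext; split_ifs at h <;> omega

noncomputable def blockEquiv (n m a j : ℕ) (hn : n = m + j) (ha : a ≤ m) :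
    Fin j ⊕ Fin m ≃ Fin n := Equiv.ofBijective _ (blockFun_bij n m a j hn ha)

lemma blockEquiv_inl (n m a j : ℕ) (hn : n = m + j) (ha : a ≤ m) (x : Fin j) :
    (blockEquiv n m a j hn ha (Sum.inl x)).val = a + x.val := rfl

lemma blockEquiv_inr (n m a j : ℕ) (hn : n = m + j) (ha : a ≤ m) (y : Fin m) :
    (blockEquiv n m a j hn ha (Sum.inr y)).val = upShift a j y.val := rfl

lemma block_cases {n m a j : ℕ} (hn : n = m + j) (ha : a ≤ m) (x : Fin n) :
    (a ≤ x.val ∧ x.val < a + j) ∨ ∃ y : Fin m, x.val = upShift a j y.val := by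
  obtain ⟨z, rfl⟩ := (blockEquiv n m a j hn ha).surjective x
  rcases z with z | z
  · left; rw [blockEquiv_inl]; omega
  · right; exact ⟨z, rfl⟩

lemma card_block (n m a b j : ℕ) (hn : n = m + j) (ha : a ≤ m) (hb : b ≤ m)
    (Q' : Equiv.Perm (Fin n) → Prop) (Q : Equiv.Perm (Fin m) → Prop)
    (h : ∀ σ ρ, (∀ (x : Fin n) (y : Fin m), x.val = upShift a j y.val →
      (σ x).val = upShift b j (ρ y).val) → BlockMap n a b j σ → (Q' σ ↔ Q ρ)) :
    Nat.card {σ : Equiv.Perm (Fin n) // BlockMap n a b j σ ∧ Q' σ}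
      = j ! * Nat.card {ρ : Equiv.Perm (Fin m) // Q ρ} := by
  set ea := blockEquiv n m a j hn ha with hea
  set eb := blockEquiv n m b j hn hb with heb
  let g : Equiv.Perm (Fin j) × Equiv.Perm (Fin m) → Equiv.Perm (Fin n) :=
    fun p => ea.symm.trans ((Equiv.Perm.sumCongr p.1 p.2).trans eb)
  have gl : ∀ p x, g p (ea (Sum.inl x)) = eb (Sum.inl (p.1 x)) := by intro p x; simp [g]
  have gr : ∀ p x, g p (ea (Sum.inr x)) = eb (Sum.inr (p.2 x)) := by intro p x; simp [g]
  have gblock : ∀ p, BlockMap n a b j (g p) := by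
    intro p x
    obtain ⟨z, rfl⟩ := ea.surjective x
    rcases z with z | z
    · rw [gl, hea, heb, blockEquiv_inl, blockEquiv_inl]
      have := (p.1 z).isLt
      have := z.isLt
      omega
    · rw [gr, hea, heb, blockEquiv_inr, blockEquiv_inr]
      unfold upShift
      split_ifs <;> omega
  have gQ : ∀ p, Q' (g p) ↔ Q p.2 := by
    intro p
    refine h _ _ ?_ (gblock p)
    intro x y hxy
    have : x = ea (Sum.inr y) := Fin.ext hxy
    rw [this, gr]
    rfl
  have ginj : Function.Injective g := by
    intro p q hpq
    apply Equiv.Perm.sumCongrHom_injective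
    ext1 x
    have := congrArg (fun s => eb.symm (s (ea x))) hpq
    simpa [g] using this
  have gsurj : ∀ σ, BlockMap n a b j σ → ∃ p, g p = σ := by
    intro σ hσ
    have := Equiv.Perm.mem_sumCongrHom_range_of_perm_mapsTo_inl
      (σ := (ea.trans σ).trans eb.symm) (by
        rintro _ ⟨x, rfl⟩
        simp only [Equiv.trans_apply]
        rcases hz : eb.symm (σ (ea (Sum.inl x))) with z | z
        · exact ⟨z, rfl⟩
        · exfalso
          have h3 := (hσ (ea (Sum.inl x))).1 (by rw [hea, blockEquiv_inl]; omega)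
          rw [Equiv.symm_apply_eq] at hz
          rw [hz, heb, blockEquiv_inr] at h3
          unfold upShift at h3
          split_ifs at h3 <;> omega)
    obtain ⟨p, hp⟩ := this
    refine ⟨p, ?_⟩
    ext1 x
    obtain ⟨z, rfl⟩ := ea.surjective x
    have h4 := congrArg (fun s => eb (s z)) hp
    simpa [g] using h4
  have hc : Nat.card (Equiv.Perm (Fin j) × {ρ : Equiv.Perm (Fin m) // Q ρ})
      = Nat.card {σ : Equiv.Perm (Fin n) // BlockMap n a b j σ ∧ Q' σ} := by
    refine Nat.card_congr (Equiv.ofBijective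
      (fun p => ⟨g (p.1, p.2.1), gblock _, (gQ _).2 p.2.2⟩) ⟨?_, ?_⟩)
    · rintro ⟨p, q, hq⟩ ⟨p', q', hq'⟩ hh
      have := ginj (congrArg Subtype.val hh)
      simp only [Prod.mk.injEq] at this
      obtain ⟨rfl, rfl⟩ := this
      rfl
    · rintro ⟨σ, hσ, hQ⟩
      obtain ⟨p, rfl⟩ := gsurj σ hσ
      exact ⟨(p.1, ⟨p.2, (gQ p).1 hQ⟩), rfl⟩
  rw [← hc, Nat.card_prod, Nat.card_perm, Nat.card_fin]

lemma image_perm_iff {n : ℕ} (σ : Equiv.Perm (Fin n)) (X Y : Finset (Fin n)) :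
    X.image σ = Y ↔ ∀ x, x ∈ X ↔ σ x ∈ Y := by
  constructor
  · rintro rfl x; simp
  · intro h
    ext y
    obtain ⟨x, rfl⟩ := σ.surjective y
    simp [h x]

lemma fixes_iff {n : ℕ} (σ : Equiv.Perm (Fin n)) (s : ℕ) :
    FixesPrefix σ s ↔ ∀ x : Fin n, x.val < s ↔ (σ x).val < s := by
  unfold FixesPrefix
  rw [image_perm_iff]
  simp [pref]

/-- Prefixes containing both blocks. -/
lemma fixes_big {n m a b j s : ℕ} (hn : n = m + j) (ha : a ≤ m)
    (σ : Equiv.Perm (Fin n)) (ρ : Equiv.Perm (Fin m))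
    (h : ∀ (x : Fin n) (y : Fin m), x.val = upShift a j y.val →
      (σ x).val = upShift b j (ρ y).val) (hB : BlockMap n a b j σ)
    (has : a + j ≤ s) (hbs : b + j ≤ s) :
    FixesPrefix σ s ↔ FixesPrefix ρ (s - j) := by
  rw [fixes_iff, fixes_iff]
  have key : ∀ c y, c + j ≤ s → (upShift c j y < s ↔ y < s - j) := by
    intro c y hc; unfold upShift; split_ifs <;> omega
  constructor
  · intro H y
    have hx := H (blockEquiv n m a j hn ha (Sum.inr y))
    rwa [h _ y rfl, blockEquiv_inr, key _ _ has, key _ _ hbs] at hx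
  · intro H x
    rcases block_cases hn ha x with hx | ⟨y, hy⟩
    · have := (hB x).1 hx
      omega
    · rw [h x y hy, hy, key _ _ has, key _ _ hbs]
      exact H y

/-- Prefixes before a fixed block. -/
lemma fixes_small {n m a j s : ℕ} (hn : n = m + j) (ha : a ≤ m)
    (σ : Equiv.Perm (Fin n)) (ρ : Equiv.Perm (Fin m))
    (h : ∀ (x : Fin n) (y : Fin m), x.val = upShift a j y.val →
      (σ x).val = upShift a j (ρ y).val) (hB : BlockMap n a a j σ)
    (has : s ≤ a) :
    FixesPrefix σ s ↔ FixesPrefix ρ s := by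
  rw [fixes_iff, fixes_iff]
  have key : ∀ y, (upShift a j y < s ↔ y < s) := by
    intro y; unfold upShift; split_ifs <;> omega
  constructor
  · intro H y
    have hx := H (blockEquiv n m a j hn ha (Sum.inr y))
    rwa [h _ y rfl, blockEquiv_inr, key, key] at hx
  · intro H x
    rcases block_cases hn ha x with hx | ⟨y, hy⟩
    · have := (hB x).1 hx
      omega
    · rw [h x y hy, hy, key, key]
      exact H y

/-- A second pair of blocks survives the removal of the first. -/
lemma block_second {n m a b j : ℕ} (hn : n = m + j) (hab : a + j ≤ b) (hb : b ≤ m)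
    (σ : Equiv.Perm (Fin n)) (ρ : Equiv.Perm (Fin m))
    (h : ∀ (x : Fin n) (y : Fin m), x.val = upShift a j y.val →
      (σ x).val = upShift b j (ρ y).val) (hB : BlockMap n a b j σ) :
    BlockMap n b a j σ ↔ BlockMap m (b - j) a j ρ := by
  have ha : a ≤ m := by omega
  have k1 : ∀ y, (b ≤ upShift a j y ∧ upShift a j y < b + j) ↔
      (b - j ≤ y ∧ y < b - j + j) := by
    intro y; unfold upShift; split_ifs <;> omega
  have k2 : ∀ y, (a ≤ upShift b j y ∧ upShift b j y < a + j) ↔ (a ≤ y ∧ y < a + j) := by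
    intro y; unfold upShift; split_ifs <;> omega
  constructor
  · intro H y
    have hx := H (blockEquiv n m a j hn ha (Sum.inr y))
    rwa [h _ y rfl, blockEquiv_inr, k1, k2] at hx
  · intro H x
    rcases block_cases hn ha x with hx | ⟨y, hy⟩
    · have := (hB x).1 hx
      omega
    · rw [h x y hy, hy, k1, k2]
      exact H y

lemma card_incl_excl {α : Type*} [Fintype α] (G S A B C : α → Prop)
    (hG : ∀ x, G x ↔ S x ∧ ¬ A x ∧ ¬ B x ∧ ¬ C x)
    (hAC : ∀ x, A x → ¬ C x) (hBC : ∀ x, B x → ¬ C x) :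
    (Nat.card {x // G x} : ℤ) = Nat.card {x // S x} - Nat.card {x // A x ∧ S x}
      - Nat.card {x // B x ∧ S x} + Nat.card {x // A x ∧ B x ∧ S x}
      - Nat.card {x // C x ∧ S x} := by
  classical
  simp only [Nat.card_eq_fintype_card, Fintype.card_subtype, Finset.card_filter]
  push_cast
  simp only [← Finset.sum_sub_distrib, ← Finset.sum_add_distrib]
  refine Finset.sum_congr rfl fun x _ => ?_
  have h1 := hAC x
  have h2 := hBC x
  rw [if_congr (hG x) rfl rfl]
  by_cases hA : A x <;> by_cases hB : B x <;> by_cases hC : C x <;> by_cases hS : S x <;>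
    simp_all

/-- Subdivergence-free gluings of `f_{k,i,j}` with itself, `1 < i < k`, `j ≥ 1`.
With `K = k + 2(j−1)`, `S = {j,…,i+j−2} ∪ {i+2(j−1),…,K−1}` and `F = {i+j−1,…,i+2(j−1)}`,
the number of permutations `σ` of `{1,…,K}` fixing no prefix of size `s ∈ S` and with
`σ({1,…,j}) ≠ F`, `σ(F) ≠ {1,…,j}`, `σ(F) ≠ F`, equals
`c_K^S − 2·j!·c_{k+j−2}^{{i+j−2,…,k+j−3}} + j!·j!·c_{k−2}^{{i−2,…,k−3}} − j!·c_{k+j−2}^{{j,…,k+j−3}}`. -/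
theorem line_with_extra_big_fan (k i j : ℕ) (h1 : 1 < i) (h2 : i < k) (hj : 1 ≤ j) :
    (Nat.card {σ : Equiv.Perm (Fin (k + 2 * (j - 1))) //
      (∀ s ∈ Finset.Icc j (i + j - 2) ∪
          Finset.Icc (i + 2 * (j - 1)) (k + 2 * (j - 1) - 1), ¬ FixesPrefix σ s) ∧
      (pref (k + 2 * (j - 1)) j).image σ ≠
        seg (k + 2 * (j - 1)) (i + j - 1) (i + 2 * (j - 1)) ∧
      (seg (k + 2 * (j - 1)) (i + j - 1) (i + 2 * (j - 1))).image σ ≠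
        pref (k + 2 * (j - 1)) j ∧
      (seg (k + 2 * (j - 1)) (i + j - 1) (i + 2 * (j - 1))).image σ ≠
        seg (k + 2 * (j - 1)) (i + j - 1) (i + 2 * (j - 1))} : ℤ)
    = (cS (k + 2 * (j - 1))
        (Finset.Icc j (i + j - 2) ∪
          Finset.Icc (i + 2 * (j - 1)) (k + 2 * (j - 1) - 1)) : ℤ)
      - 2 * (j ! : ℤ) * (cS (k + j - 2) (Finset.Icc (i + j - 2) (k + j - 3)) : ℤ)
      + (j ! : ℤ) * (j ! : ℤ) * (cS (k - 2) (Finset.Icc (i - 2) (k - 3)) : ℤ)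
      - (j ! : ℤ) * (cS (k + j - 2) (Finset.Icc j (k + j - 3)) : ℤ) := by
  classical
  set n := k + 2 * (j - 1) with hn
  set b := i + j - 2 with hb
  have hP : ∀ x : Fin n, x ∈ pref n j ↔ (0 ≤ x.val ∧ x.val < 0 + j) := by
    intro x; simp [pref]
  have hF : ∀ x : Fin n, x ∈ seg n (i + j - 1) (i + 2 * (j - 1)) ↔
      (b ≤ x.val ∧ x.val < b + j) := by
    intro x; simp [seg]; omega
  have e1 := card_incl_excl
    (fun σ : Equiv.Perm (Fin n) =>
      (∀ s ∈ Finset.Icc j b ∪ Finset.Icc (i + 2 * (j - 1)) (n - 1), ¬ FixesPrefix σ s) ∧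
      (pref n j).image σ ≠ seg n (i + j - 1) (i + 2 * (j - 1)) ∧
      (seg n (i + j - 1) (i + 2 * (j - 1))).image σ ≠ pref n j ∧
      (seg n (i + j - 1) (i + 2 * (j - 1))).image σ ≠ seg n (i + j - 1) (i + 2 * (j - 1)))
    (fun σ => ∀ s ∈ Finset.Icc j b ∪ Finset.Icc (i + 2 * (j - 1)) (n - 1), ¬ FixesPrefix σ s)
    (BlockMap n 0 b j) (BlockMap n b 0 j) (BlockMap n b b j)
    (by
      intro σ
      simp only [ne_eq, image_perm_iff, hP, hF]
      rfl)
    (by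
      intro σ hA hC
      have p := hA ⟨0, by omega⟩
      have q := hC ⟨0, by omega⟩
      simp only at p q
      omega)
    (by
      intro σ hA hC
      have p := hA ⟨b, by omega⟩
      have q := hC ⟨b, by omega⟩
      simp only at p q
      omega)
  -- the first case, and its mirror image
  have noSmall : ∀ (σ : Equiv.Perm (Fin n)), BlockMap n 0 b j σ →
      ∀ s, j ≤ s → s ≤ b → ¬ FixesPrefix σ s := by
    intro σ hA s hs1 hs2 hf
    rw [fixes_iff] at hf
    have p := hA ⟨0, by omega⟩
    have q := hf ⟨0, by omega⟩
    simp only at p q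
    omega
  have noSmall2 : ∀ (σ : Equiv.Perm (Fin n)), BlockMap n b 0 j σ →
      ∀ s, j ≤ s → s ≤ b → ¬ FixesPrefix σ s := by
    intro σ hA s hs1 hs2 hf
    rw [fixes_iff] at hf
    have p := hA ⟨b, by omega⟩
    have q := hf ⟨b, by omega⟩
    simp only at p q
    omega
  have eA : Nat.card {σ : Equiv.Perm (Fin n) // BlockMap n 0 b j σ ∧
      ∀ s ∈ Finset.Icc j b ∪ Finset.Icc (i + 2 * (j - 1)) (n - 1), ¬ FixesPrefix σ s}
      = j ! * cS (k + j - 2) (Finset.Icc b (k + j - 3)) := by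
    refine card_block n (k + j - 2) 0 b j (by omega) (by omega) (by omega) _ _ ?_
    intro σ ρ h hB
    constructor
    · intro H s hs
      rw [Finset.mem_Icc] at hs
      have := H (s + j) (by simp only [Finset.mem_union, Finset.mem_Icc]; omega)
      rwa [fixes_big (by omega) (by omega) σ ρ h hB (by omega) (by omega),
        Nat.add_sub_cancel] at this
    · intro H s hs
      simp only [Finset.mem_union, Finset.mem_Icc] at hs
      rcases hs with hs | hs
      · exact noSmall σ hB s hs.1 hs.2
      · rw [fixes_big (by omega) (by omega) σ ρ h hB (by omega) (by omega)]
        exact H _ (by rw [Finset.mem_Icc]; omega)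
  have eB : Nat.card {σ : Equiv.Perm (Fin n) // BlockMap n b 0 j σ ∧
      ∀ s ∈ Finset.Icc j b ∪ Finset.Icc (i + 2 * (j - 1)) (n - 1), ¬ FixesPrefix σ s}
      = j ! * cS (k + j - 2) (Finset.Icc b (k + j - 3)) := by
    refine card_block n (k + j - 2) b 0 j (by omega) (by omega) (by omega) _ _ ?_
    intro σ ρ h hB
    constructor
    · intro H s hs
      rw [Finset.mem_Icc] at hs
      have := H (s + j) (by simp only [Finset.mem_union, Finset.mem_Icc]; omega)
      rwa [fixes_big (by omega) (by omega) σ ρ h hB (by omega) (by omega),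
        Nat.add_sub_cancel] at this
    · intro H s hs
      simp only [Finset.mem_union, Finset.mem_Icc] at hs
      rcases hs with hs | hs
      · exact noSmall2 σ hB s hs.1 hs.2
      · rw [fixes_big (by omega) (by omega) σ ρ h hB (by omega) (by omega)]
        exact H _ (by rw [Finset.mem_Icc]; omega)
  have eC : Nat.card {σ : Equiv.Perm (Fin n) // BlockMap n b b j σ ∧
      ∀ s ∈ Finset.Icc j b ∪ Finset.Icc (i + 2 * (j - 1)) (n - 1), ¬ FixesPrefix σ s}
      = j ! * cS (k + j - 2) (Finset.Icc j (k + j - 3)) := by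
    refine card_block n (k + j - 2) b b j (by omega) (by omega) (by omega) _ _ ?_
    intro σ ρ h hB
    constructor
    · intro H s hs
      rw [Finset.mem_Icc] at hs
      by_cases hsb : s ≤ b
      · have := H s (by simp only [Finset.mem_union, Finset.mem_Icc]; omega)
        rwa [fixes_small (by omega) (by omega) σ ρ h hB hsb] at this
      · have := H (s + j) (by simp only [Finset.mem_union, Finset.mem_Icc]; omega)
        rwa [fixes_big (by omega) (by omega) σ ρ h hB (by omega) (by omega),
          Nat.add_sub_cancel] at this
    · intro H s hs
      simp only [Finset.mem_union, Finset.mem_Icc] at hs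
      rcases hs with hs | hs
      · rw [fixes_small (by omega) (by omega) σ ρ h hB hs.2]
        exact H _ (by rw [Finset.mem_Icc]; omega)
      · rw [fixes_big (by omega) (by omega) σ ρ h hB (by omega) (by omega)]
        exact H _ (by rw [Finset.mem_Icc]; omega)
  have eAB : Nat.card {σ : Equiv.Perm (Fin n) // BlockMap n 0 b j σ ∧ BlockMap n b 0 j σ ∧
      ∀ s ∈ Finset.Icc j b ∪ Finset.Icc (i + 2 * (j - 1)) (n - 1), ¬ FixesPrefix σ s}
      = j ! * (j ! * cS (k - 2) (Finset.Icc (i - 2) (k - 3))) := by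
    have e2 : Nat.card {ρ : Equiv.Perm (Fin (k + j - 2)) // BlockMap (k + j - 2) (b - j) 0 j ρ ∧
        ∀ s ∈ Finset.Icc b (k + j - 3), ¬ FixesPrefix ρ s}
        = j ! * cS (k - 2) (Finset.Icc (i - 2) (k - 3)) := by
      refine card_block (k + j - 2) (k - 2) (b - j) 0 j (by omega) (by omega) (by omega) _ _ ?_
      intro σ ρ h hB
      constructor
      · intro H s hs
        rw [Finset.mem_Icc] at hs
        have := H (s + j) (by rw [Finset.mem_Icc]; omega)
        rwa [fixes_big (by omega) (by omega) σ ρ h hB (by omega) (by omega),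
          Nat.add_sub_cancel] at this
      · intro H s hs
        rw [Finset.mem_Icc] at hs
        rw [fixes_big (by omega) (by omega) σ ρ h hB (by omega) (by omega)]
        exact H _ (by rw [Finset.mem_Icc]; omega)
    rw [← e2]
    refine card_block n (k + j - 2) 0 b j (by omega) (by omega) (by omega) _ _ ?_
    intro σ ρ h hB
    rw [block_second (by omega) (by omega) (by omega) σ ρ h hB]
    refine and_congr_right fun _ => ?_
    constructor
    · intro H s hs
      rw [Finset.mem_Icc] at hs
      have := H (s + j) (by simp only [Finset.mem_union, Finset.mem_Icc]; omega)
      rwa [fixes_big (by omega) (by omega) σ ρ h hB (by omega) (by omega),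
        Nat.add_sub_cancel] at this
    · intro H s hs
      simp only [Finset.mem_union, Finset.mem_Icc] at hs
      rcases hs with hs | hs
      · exact noSmall σ hB s hs.1 hs.2
      · rw [fixes_big (by omega) (by omega) σ ρ h hB (by omega) (by omega)]
        exact H _ (by rw [Finset.mem_Icc]; omega)
  rw [eA, eB, eC, eAB] at e1
  refine e1.trans ?_
  unfold cS
  push_cast
  ring
end
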